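/- Let n ≥ 1 and let R be a preorder (a reflexive transitive relation) on Fin n. Let A(R) be the algebra of n×n complex matrices T with T i j = 0 whenever ¬ R i j, and let Lat A(R) be the lattice of subspaces U of ℂⁿ with T(U) ⊆ U for every T ∈ A(R). For x ∈ Fin n let e_x denote the x-th standard basis vector and set L_x := ⨆{U ∈ Lat A(R) : e_x ∉ U}. Then: (a) for every x, L_x is a meet-irreducible element of Lat A(R) different from ℂⁿ; (b) every meet-irreducible element of Lat A(R) different from ℂⁿ equals L_x for some x; and (c) for all x, y ∈ Fin n, L_x ⊆ L_y if and only if R x y. Consequently x ↦ L_x induces an order isomorphism from the antisymmetrization (quotient partial order) of (Fin n, R) onto the partially ordered set of meet-irreducible elements of Lat A(R) other than ℂⁿ, ordered by inclusion. -/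

import Mathlib

noncomputable section

/-- The digraph algebra `A(R)` : the `n × n` complex matrices supported on the
edges of the (reflexive, transitive) relation `R`. -/
def digraphAlg (n : ℕ) (R : Fin n → Fin n → Prop) : Set (Matrix (Fin n) (Fin n) ℂ) :=
  {T | ∀ i j, ¬ R i j → T i j = 0}

/-- `Lat 𝒜` : the lattice of subspaces of `ℂⁿ` invariant under every `T ∈ 𝒜`. -/
def latMat (n : ℕ) (𝒜 : Set (Matrix (Fin n) (Fin n) ℂ)) : Set (Submodule ℂ (Fin n → ℂ)) :=
  {U | ∀ T ∈ 𝒜, ∀ x ∈ U, T.mulVec x ∈ U}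

/-- The meet-irreducible members of a family `S` of subspaces, other than `ℂⁿ`. -/
def meetIrrIn (n : ℕ) (S : Set (Submodule ℂ (Fin n → ℂ))) : Set (Submodule ℂ (Fin n → ℂ)) :=
  {M | M ∈ S ∧ M ≠ ⊤ ∧ ∀ L₁ ∈ S, ∀ L₂ ∈ S, M = L₁ ⊓ L₂ → M = L₁ ∨ M = L₂}

/-- `L_x := ⨆ {U ∈ Lat A(R) : e_x ∉ U}`. -/
def Lx (n : ℕ) (R : Fin n → Fin n → Prop) (x : Fin n) : Submodule ℂ (Fin n → ℂ) :=
  sSup {U | U ∈ latMat n (digraphAlg n R) ∧ (Pi.single x 1 : Fin n → ℂ) ∉ U}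

/-- The concrete description of `L_x`: vectors vanishing at all `j` with `R x j`. -/
def Wx (n : ℕ) (R : Fin n → Fin n → Prop) (x : Fin n) : Submodule ℂ (Fin n → ℂ) where
  carrier := {v | ∀ j, R x j → v j = 0}
  add_mem' := by
    intro a b ha hb j hj
    simp [ha j hj, hb j hj]
  zero_mem' := by
    intro j _
    rfl
  smul_mem' := by
    intro c a ha j hj
    simp [ha j hj]

theorem mem_Wx (n : ℕ) (R : Fin n → Fin n → Prop) (x : Fin n) (v : Fin n → ℂ) :
    v ∈ Wx n R x ↔ ∀ j, R x j → v j = 0 := Iff.rfl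

theorem single_mem_of_lat (n : ℕ) (R : Fin n → Fin n → Prop) (U : Submodule ℂ (Fin n → ℂ))
    (hU : U ∈ latMat n (digraphAlg n R)) (v : Fin n → ℂ) (hv : v ∈ U) (i j : Fin n)
    (hij : R i j) (hj : v j ≠ 0) : (Pi.single i 1 : Fin n → ℂ) ∈ U := by
  have hT : (Matrix.single i j (v j)⁻¹ : Matrix (Fin n) (Fin n) ℂ) ∈ digraphAlg n R := by
    intro a b hab
    apply Matrix.single_apply_of_ne
    rintro ⟨rfl, rfl⟩
    exact hab hij
  have h := hU _ hT v hv
  have h2 : (Matrix.single i j (v j)⁻¹ : Matrix (Fin n) (Fin n) ℂ).mulVec v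
      = Pi.single i 1 := by
    ext k
    rw [Matrix.single_mulVec]
    by_cases hk : k = i
    · subst hk
      simp [hj]
    · simp [Function.update, Pi.single_apply, hk]
  rwa [h2] at h

theorem Wx_mem_lat (n : ℕ) (R : Fin n → Fin n → Prop)
    (htrans : ∀ i j k, R i j → R j k → R i k) (x : Fin n) :
    Wx n R x ∈ latMat n (digraphAlg n R) := by
  intro T hT v hv i hi
  rw [Matrix.mulVec, dotProduct]
  apply Finset.sum_eq_zero
  intro j _
  by_cases h : R i j
  · rw [hv j (htrans _ _ _ hi h), mul_zero]
  · rw [hT i j h, zero_mul]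

theorem single_notMem_Wx (n : ℕ) (R : Fin n → Fin n → Prop) (hrefl : ∀ i, R i i) (x : Fin n) :
    (Pi.single x 1 : Fin n → ℂ) ∉ Wx n R x := by
  intro h
  have := h x (hrefl x)
  simp at this

theorem le_Wx (n : ℕ) (R : Fin n → Fin n → Prop) (x : Fin n) (U : Submodule ℂ (Fin n → ℂ))
    (hU : U ∈ latMat n (digraphAlg n R)) (hx : (Pi.single x 1 : Fin n → ℂ) ∉ U) :
    U ≤ Wx n R x := by
  intro v hv j hj
  by_contra h
  exact hx (single_mem_of_lat n R U hU v hv x j hj h)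

theorem Lx_eq_Wx (n : ℕ) (R : Fin n → Fin n → Prop) (hrefl : ∀ i, R i i)
    (htrans : ∀ i j k, R i j → R j k → R i k) (x : Fin n) : Lx n R x = Wx n R x := by
  apply le_antisymm
  · exact sSup_le fun U hU => le_Wx n R x U hU.1 hU.2
  · exact le_sSup ⟨Wx_mem_lat n R htrans x, single_notMem_Wx n R hrefl x⟩

theorem Wx_le_iff (n : ℕ) (R : Fin n → Fin n → Prop) (hrefl : ∀ i, R i i)
    (htrans : ∀ i j k, R i j → R j k → R i k) (x y : Fin n) :
    Wx n R x ≤ Wx n R y ↔ R x y := by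
  constructor
  · intro h
    by_contra hxy
    have h1 : (Pi.single y 1 : Fin n → ℂ) ∈ Wx n R x := by
      intro j hj
      have : j ≠ y := by
        rintro rfl
        exact hxy hj
      simp [this]
    exact single_notMem_Wx n R hrefl y (h h1)
  · intro h v hv j hj
    exact hv j (htrans _ _ _ h hj)

theorem Wx_meetIrr (n : ℕ) (R : Fin n → Fin n → Prop) (hrefl : ∀ i, R i i)
    (htrans : ∀ i j k, R i j → R j k → R i k) (x : Fin n) :
    Wx n R x ∈ meetIrrIn n (latMat n (digraphAlg n R)) := by
  refine ⟨Wx_mem_lat n R htrans x, ?_, ?_⟩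
  · intro h
    apply single_notMem_Wx n R hrefl x
    rw [h]
    trivial
  · intro L₁ h1 L₂ h2 h
    by_cases hx1 : (Pi.single x 1 : Fin n → ℂ) ∈ L₁
    · by_cases hx2 : (Pi.single x 1 : Fin n → ℂ) ∈ L₂
      · exact absurd (h ▸ ⟨hx1, hx2⟩) (single_notMem_Wx n R hrefl x)
      · exact Or.inr (le_antisymm (h.le.trans inf_le_right) (le_Wx n R x L₂ h2 hx2))
    · exact Or.inl (le_antisymm (h.le.trans inf_le_left) (le_Wx n R x L₁ h1 hx1))

theorem inf_Wx_mem_lat (n : ℕ) (R : Fin n → Fin n → Prop)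
    (htrans : ∀ i j k, R i j → R j k → R i k) (s : Finset (Fin n)) :
    s.inf (Wx n R) ∈ latMat n (digraphAlg n R) := by
  intro T hT v hv
  rw [Submodule.mem_finsetInf] at hv ⊢
  exact fun x hx => Wx_mem_lat n R htrans x T hT v (hv x hx)

theorem exists_eq_of_inf (n : ℕ) (R : Fin n → Fin n → Prop)
    (htrans : ∀ i j k, R i j → R j k → R i k) (M : Submodule ℂ (Fin n → ℂ))
    (hM : M ∈ meetIrrIn n (latMat n (digraphAlg n R))) (s : Finset (Fin n)) :
    M = s.inf (Wx n R) → ∃ x, M = Wx n R x := by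
  classical
  induction s using Finset.induction_on with
  | empty =>
    intro h
    exact absurd h hM.2.1
  | insert a s _ ih =>
    intro h
    rw [Finset.inf_insert] at h
    rcases hM.2.2 _ (Wx_mem_lat n R htrans a) _ (inf_Wx_mem_lat n R htrans s) h with h | h
    · exact ⟨a, h⟩
    · exact ih h

theorem exists_eq_Wx (n : ℕ) (R : Fin n → Fin n → Prop)
    (htrans : ∀ i j k, R i j → R j k → R i k) (M : Submodule ℂ (Fin n → ℂ))
    (hM : M ∈ meetIrrIn n (latMat n (digraphAlg n R)))  (hrefl : ∀ i, R i i) :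
    ∃ x, M = Wx n R x := by
  classical
  apply exists_eq_of_inf n R htrans M hM
    (Finset.univ.filter fun x => (Pi.single x 1 : Fin n → ℂ) ∉ M)
  apply le_antisymm
  · refine Finset.le_inf fun x hx => le_Wx n R x M hM.1 ?_
    simpa using hx
  · intro v hv
    rw [Submodule.mem_finsetInf] at hv
    have hsum : v = ∑ j, v j • (Pi.single j 1 : Fin n → ℂ) := by
      ext k
      simp [Finset.sum_apply, Pi.single_apply]
    rw [hsum]
    refine Submodule.sum_mem _ fun j _ => ?_
    by_cases hj : (Pi.single j 1 : Fin n → ℂ) ∈ M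
    · exact Submodule.smul_mem _ _ hj
    · rw [hv j (by simpa using hj) j (hrefl j), zero_smul]
      exact Submodule.zero_mem _

/-- **Proposition 3.6 (verification).** For the digraph algebra `A(R)` of a
preorder `R` on `Fin n`, the map `x ↦ L_x` identifies the antisymmetrization
of `(Fin n, R)` order-isomorphically with the set of meet-irreducible elements
of `Lat A(R)` other than `ℂⁿ`, ordered by inclusion; in particular every `L_x`
is meet-irreducible (≠ ℂⁿ), every such meet-irreducible element is some `L_x`,
and `L_x ⊆ L_y ↔ R x y`. -/
theorem digraph_algebra_meet_irreducibles
    (n : ℕ) (hn : 1 ≤ n) (R : Fin n → Fin n → Prop)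
    (hrefl : ∀ i, R i i) (htrans : ∀ i j k, R i j → R j k → R i k) :
    (∀ x : Fin n, Lx n R x ∈ meetIrrIn n (latMat n (digraphAlg n R))) ∧
    (∀ M ∈ meetIrrIn n (latMat n (digraphAlg n R)), ∃ x : Fin n, M = Lx n R x) ∧
    (∀ x y : Fin n, Lx n R x ≤ Lx n R y ↔ R x y) ∧
    ∃ φ : Quot (fun x y : Fin n => R x y ∧ R y x) ≃
        {M : Submodule ℂ (Fin n → ℂ) // M ∈ meetIrrIn n (latMat n (digraphAlg n R))},
      (∀ x : Fin n, (φ (Quot.mk _ x) : Submodule ℂ (Fin n → ℂ)) = Lx n R x) ∧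
      (∀ x y : Fin n, R x y ↔
        (φ (Quot.mk _ x) : Submodule ℂ (Fin n → ℂ)) ≤ (φ (Quot.mk _ y) : Submodule ℂ (Fin n → ℂ))) := by
  have hL := Lx_eq_Wx n R hrefl htrans
  have ha : ∀ x : Fin n, Lx n R x ∈ meetIrrIn n (latMat n (digraphAlg n R)) := fun x => by
    rw [hL]
    exact Wx_meetIrr n R hrefl htrans x
  have hb : ∀ M ∈ meetIrrIn n (latMat n (digraphAlg n R)), ∃ x : Fin n, M = Lx n R x := by
    intro M hM
    obtain ⟨x, hx⟩ := exists_eq_Wx n R htrans M hM hrefl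
    exact ⟨x, by rw [hL, hx]⟩
  have hc : ∀ x y : Fin n, Lx n R x ≤ Lx n R y ↔ R x y := fun x y => by
    rw [hL, hL]
    exact Wx_le_iff n R hrefl htrans x y
  refine ⟨ha, hb, hc, ?_⟩
  let f : Quot (fun x y : Fin n => R x y ∧ R y x) →
      {M : Submodule ℂ (Fin n → ℂ) // M ∈ meetIrrIn n (latMat n (digraphAlg n R))} :=
    Quot.lift (fun x => ⟨Lx n R x, ha x⟩) (fun x y h =>
      Subtype.ext (le_antisymm ((hc x y).2 h.1) ((hc y x).2 h.2)))
  have hf : Function.Bijective f := by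
    constructor
    · rintro ⟨x⟩ ⟨y⟩ h
      have h' : Lx n R x = Lx n R y := congrArg Subtype.val h
      exact Quot.sound ⟨(hc x y).1 h'.le, (hc y x).1 h'.ge⟩
    · rintro ⟨M, hM⟩
      obtain ⟨x, hx⟩ := hb M hM
      exact ⟨Quot.mk _ x, Subtype.ext hx.symm⟩
  exact ⟨Equiv.ofBijective f hf, fun x => rfl, fun x y => (hc x y).symm⟩
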